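/- Let n ≥ 1 and λ ≥ n be real (λ = n + α̂ with α̂ ≥ 0 in the paper), and let 0 < ε < 1/λ. For every C_0 > 8λ there exists C > 0 such that for all x, y ∈ [0,∞)^n and s ∈ (−1,1)^n with q_−(x,y,s) > C_0²/(1 + |x| + |y|)², one has ∫_0^1 t^{−(λ+1)} (1−t)^{−1/2} · exp(−(1−ε)·q_−(√(1−t)·x, y, s)/t) dt ≤ C·H_{λ,ε}(x,y,s), where √(1−t)·x = (√(1−t)x_1,…,√(1−t)x_n). -/

import Mathlib

open MeasureTheory

/-- `q₊(x,y,s) = Σᵢ (xᵢ² + yᵢ² + 2xᵢyᵢsᵢ)`. -/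
noncomputable def qPlus (n : ℕ) (x y s : Fin n → ℝ) : ℝ :=
  ∑ i, (x i ^ 2 + y i ^ 2 + 2 * x i * y i * s i)

/-- `q₋(x,y,s) = Σᵢ (xᵢ² + yᵢ² − 2xᵢyᵢsᵢ)`. -/
noncomputable def qMinus (n : ℕ) (x y s : Fin n → ℝ) : ℝ :=
  ∑ i, (x i ^ 2 + y i ^ 2 - 2 * x i * y i * s i)

/-- The global kernel `H_{λ,ε}`: equal to `exp(−(1−ε)|y|²)` when `Σᵢ xᵢyᵢsᵢ ≤ 0`,
and to `q₊^λ · exp(−((1−ε)/2)(|y|² − |x|² + √(q₊q₋)))` when `Σᵢ xᵢyᵢsᵢ > 0`. -/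
noncomputable def Hker (n : ℕ) (lam eps : ℝ) (x y s : Fin n → ℝ) : ℝ :=
  if (∑ i, x i * y i * s i) ≤ 0 then
    Real.exp (-(1 - eps) * ∑ i, y i ^ 2)
  else
    qPlus n x y s ^ lam *
      Real.exp (-((1 - eps) / 2) *
        ((∑ i, y i ^ 2) - (∑ i, x i ^ 2) +
          Real.sqrt (qPlus n x y s * qMinus n x y s)))

/-!
Write `X = |x|²`, `Y = |y|²`, `B = ∑ xᵢ yᵢ sᵢ`, `P = √q₊` and `M = √q₋`. Completing the square
gives, when `B > 0`,

  `q₋(r x, y, s) = (1 - r²) (Y - X + P M) / 2 + ((P + M) r - (P - M))² / 4`,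

so with `r = √(1 - t)` the phase `q₋(√(1 - t) x, y, s) / t` is minimal at `t₀ = 4 P M / (P + M)²`.
On the global region `P M` is bounded below, whence the square dominates a multiple of `t₀ - 2 t`
and the integral is at most a constant times `exp(-(1 - ε) E) ∫ t^(-(λ + 1)) exp(-δ t₀ / t) dt`,
where `E` is the minimum; the last integral is of order `t₀^(-λ)`, and `t₀⁻¹ ≲ P² = q₊`, again
because `P M` is bounded below. When `B ≤ 0` the phase is minimal at `t = 1`, with value `Y`.
-/

open Set Real

lemma integral_rpow_mul_exp_neg_div_Ioi {a r : ℝ} (ha : 0 < a) (hr : 0 < r) :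
    ∫ t in Ioi 0, t ^ (-(a + 1)) * exp (-(r / t)) = r ^ (-a) * Gamma a := by
  have hinv : r ^ (-a) = (1 / r) ^ a := by rw [one_div, inv_rpow hr.le, rpow_neg hr.le]
  rw [hinv, ← integral_rpow_mul_exp_neg_mul_Ioi ha hr,
    ← integral_comp_rpow_Ioi (fun u ↦ u ^ (a - 1) * exp (-(r * u))) (neg_ne_zero.2 one_ne_zero)]
  refine setIntegral_congr_fun measurableSet_Ioi fun t (ht : 0 < t) ↦ ?_
  have hpow : t ^ (-(a + 1)) = t ^ (-1 - 1 : ℝ) * (t ^ (-1 : ℝ)) ^ (a - 1) := by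
    rw [← rpow_mul ht.le, ← rpow_add ht]
    ring_nf
  simp only [hpow, abs_neg, abs_one, one_mul, smul_eq_mul, rpow_neg_one, div_eq_mul_inv, mul_assoc]

lemma lintegral_rpow_mul_exp_neg_div_Ioi {a r : ℝ} (ha : 0 < a) (hr : 0 < r) :
    ∫⁻ t in Ioi 0, ENNReal.ofReal (t ^ (-(a + 1)) * exp (-(r / t))) =
      ENNReal.ofReal (r ^ (-a) * Gamma a) := by
  have hint := integral_rpow_mul_exp_neg_div_Ioi ha hr
  have hpos : 0 < r ^ (-a) * Gamma a := by positivity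
  rw [← ofReal_integral_eq_lintegral_ofReal (.of_integral_ne_zero (hint ▸ hpos.ne')), hint]
  filter_upwards [ae_restrict_mem measurableSet_Ioi] with t (ht : 0 < t)
  positivity

lemma lintegral_one_sub_rpow_Ioo {b : ℝ} (hb : -1 < b) :
    ∫⁻ t in Ioo (0 : ℝ) 1, ENNReal.ofReal ((1 - t) ^ b) = ENNReal.ofReal (1 / (b + 1)) := by
  have hb' : 0 < b + 1 := by linarith
  have hint : ∫ t in Ioo (0 : ℝ) 1, (1 - t) ^ b = 1 / (b + 1) := by
    rw [← integral_Ioc_eq_integral_Ioo, ← intervalIntegral.integral_of_le zero_le_one,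
      intervalIntegral.integral_comp_sub_left (fun u ↦ u ^ b), integral_rpow (.inl hb)]
    simp [zero_rpow hb'.ne']
  rw [← ofReal_integral_eq_lintegral_ofReal (.of_integral_ne_zero (by rw [hint]; positivity)), hint]
  filter_upwards [ae_restrict_mem measurableSet_Ioo] with t ht
  exact rpow_nonneg (sub_nonneg.2 ht.2.le) b

lemma rpow_mul_one_sub_rpow_mul_exp_le {a b r t : ℝ} (ha : 0 ≤ a) (hb : b ≤ 0) (hr : 0 ≤ r)
    (ht : t ∈ Ioo (0 : ℝ) 1) :
    t ^ (-(a + 1)) * (1 - t) ^ b * exp (-(r / t)) ≤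
      (1 / 2) ^ b * (t ^ (-(a + 1)) * exp (-(r / t))) + (1 / 2) ^ (-(a + 1)) * (1 - t) ^ b := by
  obtain ⟨ht0, ht1⟩ := ht
  have : 0 < 1 - t := sub_pos.2 ht1
  rcases le_total t (1 / 2) with h | h
  · have hle : (1 - t) ^ b ≤ (1 / 2) ^ b :=
      rpow_le_rpow_of_nonpos (by norm_num) (by linarith) hb
    calc t ^ (-(a + 1)) * (1 - t) ^ b * exp (-(r / t))
        = (1 - t) ^ b * (t ^ (-(a + 1)) * exp (-(r / t))) := by ring
      _ ≤ (1 / 2) ^ b * (t ^ (-(a + 1)) * exp (-(r / t))) := by gcongr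
      _ ≤ _ := le_add_of_nonneg_right (by positivity)
  · have hle : t ^ (-(a + 1)) ≤ (1 / 2) ^ (-(a + 1)) :=
      rpow_le_rpow_of_nonpos (by norm_num) h (by linarith)
    have hexp : exp (-(r / t)) ≤ 1 := exp_le_one_iff.2 (neg_nonpos.2 (by positivity))
    calc t ^ (-(a + 1)) * (1 - t) ^ b * exp (-(r / t))
        ≤ (1 / 2) ^ (-(a + 1)) * (1 - t) ^ b * 1 := by gcongr
      _ = (1 / 2) ^ (-(a + 1)) * (1 - t) ^ b := mul_one _
      _ ≤ _ := le_add_of_nonneg_left (by positivity)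

lemma lintegral_rpow_mul_one_sub_rpow_mul_exp_le {a b r : ℝ} (ha : 0 < a) (hb : b ∈ Ioc (-1) 0)
    (hr : 0 < r) :
    ∫⁻ t in Ioo (0 : ℝ) 1, ENNReal.ofReal (t ^ (-(a + 1)) * (1 - t) ^ b * exp (-(r / t))) ≤
      ENNReal.ofReal
        ((1 / 2) ^ b * Gamma a * r ^ (-a) + (1 / 2) ^ (-(a + 1)) * (1 / (b + 1))) := by
  have hb' : 0 < b + 1 := by linarith [hb.1]
  calc ∫⁻ t in Ioo (0 : ℝ) 1, ENNReal.ofReal (t ^ (-(a + 1)) * (1 - t) ^ b * exp (-(r / t)))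
      ≤ ∫⁻ t in Ioo (0 : ℝ) 1,
          (ENNReal.ofReal ((1 / 2) ^ b) * ENNReal.ofReal (t ^ (-(a + 1)) * exp (-(r / t))) +
            ENNReal.ofReal ((1 / 2) ^ (-(a + 1))) * ENNReal.ofReal ((1 - t) ^ b)) := by
        refine setLIntegral_mono' measurableSet_Ioo fun t ht ↦ ?_
        have ht0 := ht.1
        have ht1 : 0 < 1 - t := sub_pos.2 ht.2
        rw [← ENNReal.ofReal_mul (by positivity), ← ENNReal.ofReal_mul (by positivity),
          ← ENNReal.ofReal_add (by positivity) (by positivity)]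
        exact ENNReal.ofReal_le_ofReal (rpow_mul_one_sub_rpow_mul_exp_le ha.le hb.2 hr.le ht)
    _ = ENNReal.ofReal ((1 / 2) ^ b) *
            (∫⁻ t in Ioo (0 : ℝ) 1, ENNReal.ofReal (t ^ (-(a + 1)) * exp (-(r / t)))) +
          ENNReal.ofReal ((1 / 2) ^ (-(a + 1))) *
            ∫⁻ t in Ioo (0 : ℝ) 1, ENNReal.ofReal ((1 - t) ^ b) := by
        rw [lintegral_add_right _ (by fun_prop), lintegral_const_mul _ (by fun_prop),
          lintegral_const_mul _ (by fun_prop)]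
    _ ≤ ENNReal.ofReal ((1 / 2) ^ b) * ENNReal.ofReal (r ^ (-a) * Gamma a) +
          ENNReal.ofReal ((1 / 2) ^ (-(a + 1))) * ENNReal.ofReal (1 / (b + 1)) := by
        rw [lintegral_one_sub_rpow_Ioo hb.1, ← lintegral_rpow_mul_exp_neg_div_Ioi ha hr]
        gcongr
        exact Ioo_subset_Ioi_self
    _ = _ := by
        rw [← ENNReal.ofReal_mul (by positivity), ← ENNReal.ofReal_mul (by positivity),
          ← ENNReal.ofReal_add (by positivity) (by positivity)]
        congr 1
        ring

lemma exp_neg_mul_div_le {κ c E q t t₀ : ℝ} (hκ : 0 ≤ κ) (ht : 0 < t)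
    (hq : t * E + c * (t₀ - 2 * t) ≤ q) :
    exp (-κ * q / t) ≤ exp (2 * κ * c - κ * E) * exp (-(κ * c * t₀ / t)) := by
  rw [← exp_add, exp_le_exp, div_le_iff₀ ht]
  calc -κ * q ≤ -κ * (t * E + c * (t₀ - 2 * t)) :=
        mul_le_mul_of_nonpos_left hq (neg_nonpos.2 hκ)
    _ = (2 * κ * c - κ * E + -(κ * c * t₀ / t)) * t := by field_simp; ring

lemma exists_lintegral_exp_neg_phase_le {a b κ c : ℝ} (ha : 0 < a) (hb : b ∈ Ioc (-1) 0)
    (hκ : 0 < κ) (hc : 0 < c) :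
    ∃ K > 0, ∀ (Q : ℝ → ℝ) (E t₀ : ℝ), t₀ ∈ Ioc 0 1 →
      (∀ t ∈ Ioo 0 1, t * E + c * (t₀ - 2 * t) ≤ Q t) →
      ∫⁻ t in Ioo (0 : ℝ) 1,
          ENNReal.ofReal (t ^ (-(a + 1)) * (1 - t) ^ b * exp (-κ * Q t / t)) ≤
        ENNReal.ofReal (K * (t₀ ^ (-a) * exp (-κ * E))) := by
  have hb' : 0 < b + 1 := by linarith [hb.1]
  set A : ℝ := (1 / 2) ^ b * Gamma a * (κ * c) ^ (-a)
  set D : ℝ := (1 / 2) ^ (-(a + 1)) * (1 / (b + 1))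
  refine ⟨exp (2 * κ * c) * (A + D), by positivity, fun Q E t₀ ⟨ht₀, ht₀'⟩ hQ ↦ ?_⟩
  have hone : 1 ≤ t₀ ^ (-a) := one_le_rpow_of_pos_of_le_one_of_nonpos ht₀ ht₀' (by linarith)
  calc ∫⁻ t in Ioo (0 : ℝ) 1,
          ENNReal.ofReal (t ^ (-(a + 1)) * (1 - t) ^ b * exp (-κ * Q t / t))
      ≤ ∫⁻ t in Ioo (0 : ℝ) 1, ENNReal.ofReal (exp (2 * κ * c - κ * E)) *
          ENNReal.ofReal (t ^ (-(a + 1)) * (1 - t) ^ b * exp (-(κ * c * t₀ / t))) := by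
        refine setLIntegral_mono' measurableSet_Ioo fun t ht ↦ ?_
        have ht0 := ht.1
        have ht1 : 0 < 1 - t := sub_pos.2 ht.2
        rw [← ENNReal.ofReal_mul (by positivity), mul_left_comm]
        gcongr
        exact exp_neg_mul_div_le hκ.le ht0 (hQ t ht)
    _ ≤ ENNReal.ofReal (exp (2 * κ * c - κ * E)) *
          ENNReal.ofReal ((1 / 2) ^ b * Gamma a * (κ * c * t₀) ^ (-a) + D) := by
        rw [lintegral_const_mul _ (by fun_prop)]
        gcongr
        exact lintegral_rpow_mul_one_sub_rpow_mul_exp_le ha hb (by positivity)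
    _ ≤ ENNReal.ofReal (exp (2 * κ * c - κ * E)) * ENNReal.ofReal ((A + D) * t₀ ^ (-a)) := by
        gcongr
        rw [mul_rpow (by positivity) ht₀.le, ← mul_assoc, add_mul]
        gcongr
        exact le_mul_of_one_le_right (by positivity) hone
    _ = ENNReal.ofReal (exp (2 * κ * c) * (A + D) * (t₀ ^ (-a) * exp (-κ * E))) := by
        rw [← ENNReal.ofReal_mul (by positivity), sub_eq_add_neg, exp_add, ← neg_mul]
        congr 1
        ring

lemma mul_sub_two_mul_le_sq {P M c r : ℝ} (hP : 0 < P) (hM : 0 < M) (hc : 0 ≤ c)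
    (hcPM : c ≤ P * M) (hr : r ∈ Icc (-1) 1) :
    c / 4 * (4 * P * M / (P + M) ^ 2 - 2 * (1 - r ^ 2)) ≤ ((P + M) * r - (P - M)) ^ 2 / 4 := by
  obtain ⟨hr0, hr1⟩ := hr
  set t := 1 - r ^ 2 with ht
  set t₀ := 4 * P * M / (P + M) ^ 2 with ht₀
  have hPM : P * M = (P + M) ^ 2 / 4 * t₀ := by rw [ht₀]; field_simp
  have hdiff : (P + M) ^ 2 * (t - t₀) = -((P + M) * r - (P - M)) * ((P + M) * r + (P - M)) := by
    linear_combination (P + M) ^ 2 * ht + 4 * hPM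
  have hsum : ((P + M) * r + (P - M)) ^ 2 ≤ (2 * (P + M)) ^ 2 := by
    apply sq_le_sq' <;> nlinarith
  have hsq : (P + M) ^ 2 * (t - t₀) ^ 2 ≤ 4 * ((P + M) * r - (P - M)) ^ 2 := by
    refine le_of_mul_le_mul_left ?_ (by positivity : 0 < (P + M) ^ 2)
    calc (P + M) ^ 2 * ((P + M) ^ 2 * (t - t₀) ^ 2)
        = ((P + M) * r - (P - M)) ^ 2 * ((P + M) * r + (P - M)) ^ 2 := by
          linear_combination ((P + M) ^ 2 * (t - t₀) -
            ((P + M) * r - (P - M)) * ((P + M) * r + (P - M))) * hdiff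
      _ ≤ ((P + M) * r - (P - M)) ^ 2 * (2 * (P + M)) ^ 2 := by gcongr
      _ = _ := by ring
  rcases le_total (t₀ - 2 * t) 0 with h | h
  · exact (mul_nonpos_of_nonneg_of_nonpos (by positivity) h).trans (by positivity)
  · calc c / 4 * (t₀ - 2 * t) ≤ P * M / 4 * (t₀ - 2 * t) := by gcongr
      _ = (P + M) ^ 2 / 16 * (t₀ * (t₀ - 2 * t)) := by rw [hPM]; ring
      _ ≤ (P + M) ^ 2 / 16 * (t - t₀) ^ 2 := by gcongr; nlinarith [sq_nonneg t]
      _ ≤ ((P + M) * r - (P - M)) ^ 2 / 4 := by linarith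

lemma exists_forall_le_mul_of_lt_mul {C₀ : ℝ} (hC₀ : 0 < C₀) :
    ∃ c ∈ Ioc (0 : ℝ) 1, ∀ P M : ℝ, 0 ≤ M → M ≤ P → C₀ < M * (1 + 2 * P) → c ≤ P * M := by
  set k := min 1 (C₀ / 3)
  have hk : 0 < k := by positivity
  have hk1 : k ≤ 1 := min_le_left _ _
  have hk3 : k ≤ C₀ / 3 := min_le_right _ _
  refine ⟨k ^ 2, ⟨by positivity, pow_le_one₀ hk.le hk1⟩, fun P M hM hMP hlt ↦ ?_⟩
  by_contra! hPM
  have hMk : M < k := lt_of_pow_lt_pow_left₀ 2 hk.le (by nlinarith)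
  refine hlt.not_ge ?_
  calc M * (1 + 2 * P) = M + 2 * (P * M) := by ring
    _ ≤ k + 2 * k ^ 2 := by gcongr
    _ ≤ C₀ := by nlinarith

section QuadraticForms

variable {n : ℕ} {x y s : Fin n → ℝ}

lemma qPlus_eq : qPlus n x y s = ∑ i, x i ^ 2 + ∑ i, y i ^ 2 + 2 * ∑ i, x i * y i * s i := by
  simp only [qPlus, Finset.mul_sum, Finset.sum_add_distrib, mul_assoc]

lemma qMinus_eq : qMinus n x y s = ∑ i, x i ^ 2 + ∑ i, y i ^ 2 - 2 * ∑ i, x i * y i * s i := by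
  simp only [qMinus, Finset.mul_sum, Finset.sum_add_distrib, Finset.sum_sub_distrib, mul_assoc]

lemma qMinus_const_mul (r : ℝ) :
    qMinus n (fun i ↦ r * x i) y s =
      r ^ 2 * ∑ i, x i ^ 2 + ∑ i, y i ^ 2 - 2 * r * ∑ i, x i * y i * s i := by
  simp only [qMinus_eq, Finset.mul_sum, mul_pow, mul_assoc]

lemma qMinus_le_qPlus_iff : qMinus n x y s ≤ qPlus n x y s ↔ 0 ≤ ∑ i, x i * y i * s i := by
  rw [qMinus_eq, qPlus_eq]
  constructor <;> intro h <;> linarith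

lemma qPlus_le_qMinus_iff : qPlus n x y s ≤ qMinus n x y s ↔ ∑ i, x i * y i * s i ≤ 0 := by
  rw [qMinus_eq, qPlus_eq]
  constructor <;> intro h <;> linarith

variable (n x y s) in
/-- The point `t₀` at which the phase `t ↦ q₋(√(1 - t) x, y, s) / t` attains its minimum on
`(0, 1]`, provided `q₋(x, y, s) > 0`. -/
noncomputable def criticalTime : ℝ :=
  if ∑ i, x i * y i * s i ≤ 0 then 1
  else 4 * √(qPlus n x y s) * √(qMinus n x y s) / (√(qPlus n x y s) + √(qMinus n x y s)) ^ 2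

variable (n x y s) in
/-- The minimum of the phase `t ↦ q₋(√(1 - t) x, y, s) / t` over `(0, 1]`, attained at
`criticalTime n x y s`; it is the exponent occurring in `Hker`. -/
noncomputable def minPhase : ℝ :=
  if ∑ i, x i * y i * s i ≤ 0 then ∑ i, y i ^ 2
  else (∑ i, y i ^ 2 - ∑ i, x i ^ 2 + √(qPlus n x y s) * √(qMinus n x y s)) / 2

lemma criticalTime_mem_Ioc (hq : 0 < qMinus n x y s) : criticalTime n x y s ∈ Ioc 0 1 := by
  rw [criticalTime]
  split_ifs with hB
  · exact ⟨one_pos, le_rfl⟩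
  · have hq' : 0 < qPlus n x y s := hq.trans_le (qMinus_le_qPlus_iff.2 (not_le.1 hB).le)
    exact ⟨by positivity, div_le_one_of_le₀ (four_mul_le_sq_add _ _) (by positivity)⟩

lemma qMinus_const_mul_eq_add_sq (hm : 0 ≤ qMinus n x y s) (hp : 0 ≤ qPlus n x y s) (r : ℝ) :
    qMinus n (fun i ↦ r * x i) y s =
      (1 - r ^ 2) *
          ((∑ i, y i ^ 2 - ∑ i, x i ^ 2 + √(qPlus n x y s) * √(qMinus n x y s)) / 2) +
        ((√(qPlus n x y s) + √(qMinus n x y s)) * r -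
          (√(qPlus n x y s) - √(qMinus n x y s))) ^ 2 / 4 := by
  have hP := (sq_sqrt hp).trans qPlus_eq
  have hM := (sq_sqrt hm).trans qMinus_eq
  rw [qMinus_const_mul]
  linear_combination (-(r - 1) ^ 2 / 4) * hP + (-(r + 1) ^ 2 / 4) * hM

lemma add_mul_qMinus_le_qMinus_const_mul (hB : ∑ i, x i * y i * s i ≤ 0) {r : ℝ}
    (hr : r ∈ Icc 0 1) :
    (1 - r ^ 2) * ∑ i, y i ^ 2 + r ^ 2 * qMinus n x y s ≤ qMinus n (fun i ↦ r * x i) y s := by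
  have hcross : 0 ≤ r * (1 - r) * -∑ i, x i * y i * s i :=
    mul_nonneg (mul_nonneg hr.1 (sub_nonneg.2 hr.2)) (neg_nonneg.2 hB)
  rw [qMinus_const_mul, qMinus_eq]
  linarith

lemma minPhase_add_le_qMinus {c t : ℝ} (hq : 0 < qMinus n x y s) (hc : 0 ≤ c)
    (hcq : c ≤ √(max (qPlus n x y s) (qMinus n x y s)) * √(qMinus n x y s))
    (ht : t ∈ Ioo 0 1) :
    t * minPhase n x y s + c / 4 * (criticalTime n x y s - 2 * t) ≤
      qMinus n (fun i ↦ √(1 - t) * x i) y s := by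
  have hr : √(1 - t) ∈ Icc 0 1 := ⟨sqrt_nonneg _, sqrt_le_one.2 (by linarith [ht.1])⟩
  have htr : t = 1 - √(1 - t) ^ 2 := by rw [sq_sqrt (by linarith [ht.2])]; ring
  generalize √(1 - t) = r at hr htr
  subst htr
  rw [minPhase, criticalTime]
  split_ifs with hB
  · rw [max_eq_right (qPlus_le_qMinus_iff.2 hB), mul_self_sqrt hq.le] at hcq
    refine le_trans ?_ (add_mul_qMinus_le_qMinus_const_mul hB hr)
    gcongr _ + ?_
    calc c / 4 * (1 - 2 * (1 - r ^ 2)) ≤ r ^ 2 * c := by nlinarith [mul_nonneg hc (sq_nonneg r)]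
      _ ≤ r ^ 2 * qMinus n x y s := by gcongr
  · have hmp := qMinus_le_qPlus_iff.2 (not_le.1 hB).le
    rw [max_eq_left hmp] at hcq
    rw [qMinus_const_mul_eq_add_sq hq.le (hq.le.trans hmp)]
    gcongr
    exact mul_sub_two_mul_le_sq (sqrt_pos.2 (hq.trans_le hmp)) (sqrt_pos.2 hq) hc hcq
      ⟨by linarith [hr.1], hr.2⟩

lemma criticalTime_rpow_mul_exp_le_Hker {c lam : ℝ} (eps : ℝ) (hlam : 0 ≤ lam)
    (hq : 0 < qMinus n x y s) (hc : c ∈ Ioc 0 1)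
    (hcq : c ≤ √(max (qPlus n x y s) (qMinus n x y s)) * √(qMinus n x y s)) :
    criticalTime n x y s ^ (-lam) * exp (-(1 - eps) * minPhase n x y s) ≤
      c ^ (-lam) * Hker n lam eps x y s := by
  obtain ⟨hc0, hc1⟩ := hc
  rw [criticalTime, minPhase, Hker]
  split_ifs with hB
  · rw [one_rpow]
    gcongr
    exact one_le_rpow_of_pos_of_le_one_of_nonpos hc0 hc1 (neg_nonpos.2 hlam)
  · have hmp := qMinus_le_qPlus_iff.2 (not_le.1 hB).le
    have hp : 0 < qPlus n x y s := hq.trans_le hmp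
    rw [max_eq_left hmp] at hcq
    have hMP := sqrt_le_sqrt hmp
    have hpow : c ^ (-lam) * qPlus n x y s ^ lam = (c / qPlus n x y s) ^ (-lam) := by
      rw [div_rpow hc0.le hp.le, rpow_neg hp.le lam, div_inv_eq_mul]
    rw [sqrt_mul hp.le, ← mul_assoc, hpow, ← mul_div_assoc, ← neg_div, div_mul_eq_mul_div]
    gcongr ?_ * _
    refine rpow_le_rpow_of_nonpos (by positivity) ?_ (neg_nonpos.2 hlam)
    calc c / qPlus n x y s
        ≤ √(qPlus n x y s) * √(qMinus n x y s) / √(qPlus n x y s) ^ 2 := by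
          rw [sq_sqrt hp.le]
          gcongr
      _ = 4 * √(qPlus n x y s) * √(qMinus n x y s) /
            (√(qPlus n x y s) + √(qPlus n x y s)) ^ 2 := by
          field_simp
          ring
      _ ≤ _ := by gcongr

lemma lt_sqrt_qMinus_mul_of_global {C₀ : ℝ}
    (hG : C₀ ^ 2 / (1 + √(∑ i, x i ^ 2) + √(∑ i, y i ^ 2)) ^ 2 < qMinus n x y s) :
    C₀ < √(qMinus n x y s) * (1 + 2 * √(max (qPlus n x y s) (qMinus n x y s))) := by
  set X := ∑ i, x i ^ 2
  set Y := ∑ i, y i ^ 2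
  set q := max (qPlus n x y s) (qMinus n x y s)
  have hq : 0 ≤ q := le_max_of_le_right (le_trans (by positivity) hG.le)
  have hXY : 2 * (X + Y) = qPlus n x y s + qMinus n x y s := by
    rw [qPlus_eq, qMinus_eq]
    ring
  have hnorm : √X + √Y ≤ 2 * √q := by
    refine le_of_sq_le_sq ?_ (by positivity)
    calc (√X + √Y) ^ 2 ≤ 2 * (√X ^ 2 + √Y ^ 2) := add_sq_le
      _ = qPlus n x y s + qMinus n x y s := by
          rw [sq_sqrt (by positivity), sq_sqrt (by positivity), hXY]
      _ ≤ q + q := add_le_add (le_max_left _ _) (le_max_right _ _)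
      _ ≤ (2 * √q) ^ 2 := by rw [mul_pow, sq_sqrt hq]; linarith
  rw [← div_pow] at hG
  calc C₀ < √(qMinus n x y s) * (1 + √X + √Y) :=
        (div_lt_iff₀ (by positivity)).1 (lt_sqrt_of_sq_lt hG)
    _ ≤ √(qMinus n x y s) * (1 + 2 * √q) := by
        rw [add_assoc]
        gcongr

end QuadraticForms

theorem riesz_global_kernel_estimate_general (n : ℕ) {lam eps C₀ : ℝ} (hlam : 0 < lam)
    (heps : eps < 1) (hC₀ : 0 < C₀) :
    ∃ C > (0 : ℝ), ∀ x y s : Fin n → ℝ,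
      C₀ ^ 2 / (1 + √(∑ i, x i ^ 2) + √(∑ i, y i ^ 2)) ^ 2 < qMinus n x y s →
      ∫⁻ t in Ioo (0 : ℝ) 1,
          ENNReal.ofReal (t ^ (-(lam + 1)) * (1 - t) ^ (-(1 : ℝ) / 2) *
            exp (-(1 - eps) * qMinus n (fun i ↦ √(1 - t) * x i) y s / t)) ≤
        ENNReal.ofReal (C * Hker n lam eps x y s) := by
  obtain ⟨c, hc, hglobal⟩ := exists_forall_le_mul_of_lt_mul hC₀
  have hc0 : 0 < c := hc.1
  obtain ⟨K, hK, hint⟩ := exists_lintegral_exp_neg_phase_le (b := -(1 : ℝ) / 2) (c := c / 4) hlam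
    (by norm_num) (sub_pos.2 heps) (by positivity)
  refine ⟨K * c ^ (-lam), by positivity, fun x y s hG ↦ ?_⟩
  have hq : 0 < qMinus n x y s := lt_of_le_of_lt (by positivity) hG
  have hcq := hglobal _ _ (sqrt_nonneg _) (sqrt_le_sqrt (le_max_right _ _))
    (lt_sqrt_qMinus_mul_of_global hG)
  refine (hint _ (minPhase n x y s) _ (criticalTime_mem_Ioc hq)
    fun t ↦ minPhase_add_le_qMinus hq hc0.le hcq).trans ?_
  rw [mul_assoc]
  exact ENNReal.ofReal_le_ofReal <| mul_le_mul_of_nonneg_left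
    (criticalTime_rpow_mul_exp_le_Hker eps hlam.le hq hc hcq) hK.le

/-- **Kernel estimate for the global Riesz–Laguerre transforms** (Section 5).
Let `n ≥ 1`, `λ ≥ n`, `0 < ε < 1/λ`. For every `C₀ > 8λ` there is `C > 0` such that
on the global region `q₋(x,y,s) > C₀²/(1+|x|+|y|)²` (`x, y ∈ [0,∞)ⁿ`, `s ∈ (−1,1)ⁿ`),
`∫₀¹ t^{−(λ+1)} (1−t)^{−1/2} exp(−(1−ε) q₋(√(1−t)x,y,s)/t) dt ≤ C·H_{λ,ε}(x,y,s)`. -/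
theorem riesz_global_kernel_estimate (n : ℕ) (hn : 1 ≤ n) (lam : ℝ)
    (hlam : (n : ℝ) ≤ lam) (eps : ℝ) (heps0 : 0 < eps) (heps1 : eps < 1 / lam)
    (C0 : ℝ) (hC0 : 8 * lam < C0) :
    ∃ C > (0:ℝ), ∀ x y s : Fin n → ℝ,
      (∀ i, 0 ≤ x i) → (∀ i, 0 ≤ y i) → (∀ i, s i ∈ Set.Ioo (-1 : ℝ) 1) →
      C0 ^ 2 / (1 + Real.sqrt (∑ i, x i ^ 2) + Real.sqrt (∑ i, y i ^ 2)) ^ 2 <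
        qMinus n x y s →
      ∫⁻ t in Set.Ioo (0 : ℝ) 1,
          ENNReal.ofReal (t ^ (-(lam + 1)) * (1 - t) ^ (-(1:ℝ)/2) *
            Real.exp (-(1 - eps) *
              qMinus n (fun i => Real.sqrt (1 - t) * x i) y s / t)) ≤
        ENNReal.ofReal (C * Hker n lam eps x y s) := by
  have hlam1 : 1 ≤ lam := le_trans (by exact_mod_cast hn) hlam
  obtain ⟨C, hC, h⟩ := riesz_global_kernel_estimate_general n (C₀ := C0)
    (zero_lt_one.trans_le hlam1) (heps1.trans_le ((div_le_one (by linarith)).2 hlam1)) (by linarith)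
  exact ⟨C, hC, fun x y s _ _ _ hG ↦ h x y s hG⟩
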